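/- Let K be a convex body in ℝ^n, let A > 0, and suppose that N(K, t·B₂ⁿ) ≤ exp(A·n/t²) for every t > 0, where N denotes the covering number. Then for every 1 ≤ k ≤ n−1 and every k-dimensional linear subspace H of ℝ^n, vol_k(P_H(K)) ≤ e^k · A^{k/2} · (n/k)^{k/2} · vol_k(B_H); equivalently vrad(P_H(K)) ≤ e·√A·√(n/k). -/

import Mathlib

open MeasureTheory Metric Set
open scoped ENNReal RealInnerProductSpace Pointwise

noncomputable section

/-- The covering number `N(A, B)`: the least number of translates of `B` needed to cover `A`. -/
def covN {n : ℕ} (A B : Set (EuclideanSpace ℝ (Fin n))) : ℕ∞ :=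
  sInf ((fun s : Finset (EuclideanSpace ℝ (Fin n)) => (s.card : ℕ∞)) ''
    {s | A ⊆ ⋃ x ∈ s, (fun b => x + b) '' B})

/-- The orthogonal projection of a set onto a subspace, viewed inside the ambient space. -/
def projSet {n : ℕ} (H : Submodule ℝ (EuclideanSpace ℝ (Fin n)))
    (A : Set (EuclideanSpace ℝ (Fin n))) : Set (EuclideanSpace ℝ (Fin n)) :=
  (fun x => (H.orthogonalProjectionOnto x : EuclideanSpace ℝ (Fin n))) '' A

/-- The volume radius of a subset of a `k`-dimensional subspace `H`: the `k`-th root of the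
ratio of its `k`-dimensional (Hausdorff) volume to that of the unit ball of `H`. -/
def vrad {n : ℕ} (k : ℕ) (H : Submodule ℝ (EuclideanSpace ℝ (Fin n)))
    (A : Set (EuclideanSpace ℝ (Fin n))) : ℝ≥0∞ :=
  (μH[(k : ℝ)] A / μH[(k : ℝ)] (closedBall (0 : EuclideanSpace ℝ (Fin n)) 1 ∩ (H : Set _)))
    ^ ((k : ℝ)⁻¹)

/-- Sudakov-type covering hypothesis implies a volume bound for all `k`-dimensional projections:
`vol_k(P_H(K)) ≤ e^k·A^{k/2}·(n/k)^{k/2}·vol_k(B_H)`, equivalently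
`vrad(P_H(K)) ≤ e·√A·√(n/k)`. -/
theorem stmt12 (n : ℕ) (K : Set (EuclideanSpace ℝ (Fin n)))
    (hK : IsCompact K) (hKc : Convex ℝ K) (hint : (interior K).Nonempty)
    (A : ℝ) (hA : 0 < A)
    (hcov : ∀ t : ℝ, 0 < t →
      (covN K (t • closedBall (0 : EuclideanSpace ℝ (Fin n)) 1) : ℝ≥0∞) ≤
        ENNReal.ofReal (Real.exp (A * n / t ^ 2))) :
    ∀ k : ℕ, 1 ≤ k → k ≤ n - 1 →
      ∀ H : Submodule ℝ (EuclideanSpace ℝ (Fin n)), Module.finrank ℝ H = k →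
        μH[(k : ℝ)] (projSet H K) ≤
            ENNReal.ofReal (Real.exp 1 ^ k * A ^ ((k : ℝ) / 2) * ((n : ℝ) / k) ^ ((k : ℝ) / 2)) *
              μH[(k : ℝ)] (closedBall (0 : EuclideanSpace ℝ (Fin n)) 1 ∩ (H : Set _)) ∧
          vrad k H (projSet H K) ≤
            ENNReal.ofReal (Real.exp 1 * Real.sqrt A * Real.sqrt ((n : ℝ) / k)) := by
  intro k hk1 hkn H _
  have hk0 : (0 : ℝ) < k := by exact_mod_cast hk1
  have hn0 : (0 : ℝ) < n := by exact_mod_cast (by omega : 0 < n)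
  have hnk : (0 : ℝ) < n / k := by positivity
  have key : μH[(k : ℝ)] (projSet H K) ≤
      ENNReal.ofReal (Real.exp 1 ^ k * A ^ ((k : ℝ) / 2) * ((n : ℝ) / k) ^ ((k : ℝ) / 2)) *
        μH[(k : ℝ)] (closedBall (0 : EuclideanSpace ℝ (Fin n)) 1 ∩ (H : Set _)) := by
    set B := closedBall (0 : EuclideanSpace ℝ (Fin n)) 1 with hB
    set t : ℝ := Real.sqrt (A * (n / k)) with ht
    have ht0 : 0 < t := by positivity
    have ht2 : t ^ 2 = A * (n / k) := Real.sq_sqrt (by positivity)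
    have hc := hcov t ht0
    have he : A * n / t ^ 2 = k := by rw [ht2]; field_simp
    rw [he] at hc
    obtain ⟨s, hs, hsc⟩ : ∃ s : Finset (EuclideanSpace ℝ (Fin n)),
        K ⊆ (⋃ x ∈ s, (fun b => x + b) '' (t • B)) ∧ (s.card : ℕ∞) = covN K (t • B) := by
      have hne : ((fun s : Finset (EuclideanSpace ℝ (Fin n)) => (s.card : ℕ∞)) ''
          {s | K ⊆ ⋃ x ∈ s, (fun b => x + b) '' (t • B)}).Nonempty := by
        by_contra h
        rw [Set.not_nonempty_iff_eq_empty] at h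
        rw [covN, h] at hc
        simp at hc
      obtain ⟨s, hs, h⟩ := csInf_mem hne
      exact ⟨s, hs, h⟩
    rw [← hsc] at hc
    have hsub : projSet H K ⊆ ⋃ x ∈ s,
        (fun b => (H.orthogonalProjectionOnto x : EuclideanSpace ℝ (Fin n)) + b) ''
          (t • (B ∩ (H : Set _))) := by
      rintro _ ⟨y, hy, rfl⟩
      have := hs hy
      simp only [mem_iUnion] at this ⊢
      obtain ⟨x, hx, _, ⟨b, hb, rfl⟩, rfl⟩ := this
      refine ⟨x, hx, _, ⟨(H.orthogonalProjectionOnto b : EuclideanSpace ℝ (Fin n)),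
        ⟨?_, Subtype.mem _⟩, rfl⟩, ?_⟩
      · rw [hB, mem_closedBall_zero_iff] at hb ⊢
        exact (H.norm_orthogonalProjectionOnto_apply_le b).trans hb
      · simp
    have hterm : ∀ x ∈ s, μH[(k : ℝ)] (
        (fun b => (H.orthogonalProjectionOnto x : EuclideanSpace ℝ (Fin n)) + b) ''
          (t • (B ∩ (H : Set _)))) = ENNReal.ofReal (t ^ k) * μH[(k : ℝ)] (B ∩ (H : Set _)) := by
      intro x _
      rw [(isometry_add_left _).hausdorffMeasure_image (Or.inl hk0.le),
        Measure.hausdorffMeasure_smul₀ hk0.le ht0.ne', ENNReal.smul_def, smul_eq_mul]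
      congr 1
      rw [ENNReal.ofReal, NNReal.rpow_natCast, Real.toNNReal_pow ht0.le,
        Real.nnnorm_of_nonneg ht0.le, Real.toNNReal_of_nonneg ht0.le]
    calc _ ≤ _ := measure_mono hsub
      _ ≤ _ := measure_biUnion_finset_le _ _
      _ = _ := Finset.sum_congr rfl hterm
      _ = (s.card : ℝ≥0∞) * ENNReal.ofReal (t ^ k) * μH[(k : ℝ)] (B ∩ (H : Set _)) := by
        simp [mul_assoc]
      _ ≤ _ := by
        gcongr
        calc _ ≤ ENNReal.ofReal (Real.exp k) * ENNReal.ofReal (t ^ k) := by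
              gcongr
              simpa using hc
          _ = _ := by
              rw [← ENNReal.ofReal_mul (by positivity)]
              congr 1
              rw [mul_assoc, ← Real.mul_rpow hA.le hnk.le, ← Real.exp_nat_mul, mul_one, ht,
                Real.sqrt_eq_rpow, ← Real.rpow_natCast, ← Real.rpow_mul (by positivity)]
              congr 2
              ring
  refine ⟨key, ?_⟩
  have h1 := ENNReal.div_le_of_le_mul key
  refine (ENNReal.rpow_le_rpow h1 (by positivity)).trans (le_of_eq ?_)
  rw [ENNReal.ofReal_rpow_of_nonneg (by positivity) (by positivity)]
  congr 1
  rw [Real.mul_rpow (by positivity) (by positivity), Real.mul_rpow (by positivity) (by positivity),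
    ← Real.rpow_natCast, ← Real.rpow_mul (by positivity), ← Real.rpow_mul hA.le,
    ← Real.rpow_mul hnk.le, Real.sqrt_eq_rpow, Real.sqrt_eq_rpow, mul_inv_cancel₀ hk0.ne',
    Real.rpow_one]
  have h2 : (k : ℝ) / 2 * (k : ℝ)⁻¹ = 1 / 2 := by field_simp
  rw [h2]
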